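/- Let f_n(x) = Γ_n ∑_{k=1}^n (1/k) 2^{−2k} (x₁x₂∂₁∂₂φ̌)(2^k x) on ℝ² with φ radial smooth supported in {4/3 ≤ |ξ| ≤ 3/2}, Γ_n = 1/ln ln n, and define u₀ⁿ = (∂₂f_n, −∂₁f_n). Then div u₀ⁿ = 0, and ‖u₀ⁿ‖_{W^{1,∞}(ℝ²)} ≤ C Γ_n for a constant C independent of n; in particular ‖u₀ⁿ‖_{W^{1,∞}} → 0 as n → ∞. -/

import Mathlib

open MeasureTheory Finset Filter
open scoped FourierTransform

/-- `Γ_n = 1 / ln(ln n)`. -/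
noncomputable def Gam (n : ℕ) : ℝ := 1 / Real.log (Real.log n)

/-- The (complex-valued) inverse Fourier transform of a real function on `ℝ²`. -/
noncomputable def phinv2 (φ : EuclideanSpace ℝ (Fin 2) → ℝ) :
    EuclideanSpace ℝ (Fin 2) → ℂ :=
  𝓕⁻ (fun ξ => (φ ξ : ℂ))

/-- Directional partial derivative `∂_i` on `ℝ²` (complex-valued functions). -/
noncomputable def D2 (i : Fin 2) (g : EuclideanSpace ℝ (Fin 2) → ℂ) :
    EuclideanSpace ℝ (Fin 2) → ℂ :=
  fun x => fderiv ℝ g x (EuclideanSpace.single i 1)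

/-- `f_n(x) = Γ_n ∑_{k=1}^n (1/k) 2^{-2k} (x₁x₂ ∂₁∂₂φ̌)(2^k x)`. -/
noncomputable def fDamp (φ : EuclideanSpace ℝ (Fin 2) → ℝ) (n : ℕ) :
    EuclideanSpace ℝ (Fin 2) → ℂ :=
  fun x => (Gam n : ℂ) * ∑ k ∈ Finset.Icc 1 n,
    (((1 / (k : ℝ)) * (2 : ℝ) ^ (-(2 * (k : ℤ))) *
        (((2 : ℝ) ^ k • x) 0 * ((2 : ℝ) ^ k • x) 1) : ℝ) : ℂ) *
      D2 0 (D2 1 (phinv2 φ)) ((2 : ℝ) ^ k • x)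

open SchwartzMap LineDeriv in
lemma D2_schwartz (i : Fin 2) (h : 𝓢(EuclideanSpace ℝ (Fin 2), ℂ)) :
    ∃ h' : 𝓢(EuclideanSpace ℝ (Fin 2), ℂ), D2 i h = h' :=
  ⟨∂_{EuclideanSpace.single i (1 : ℝ)} h, by
    ext x; rw [SchwartzMap.lineDerivOp_apply_eq_fderiv]; rfl⟩

lemma D2_mul (i : Fin 2) {f g : EuclideanSpace ℝ (Fin 2) → ℂ}
    {x : EuclideanSpace ℝ (Fin 2)}
    (hf : DifferentiableAt ℝ f x) (hg : DifferentiableAt ℝ g x) :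
    D2 i (fun y => f y * g y) x = D2 i f x * g x + f x * D2 i g x := by
  unfold D2
  rw [fderiv_fun_mul hf hg]
  simp [mul_comm]
  ring

lemma D2_add (i : Fin 2) {f g : EuclideanSpace ℝ (Fin 2) → ℂ}
    {x : EuclideanSpace ℝ (Fin 2)}
    (hf : DifferentiableAt ℝ f x) (hg : DifferentiableAt ℝ g x) :
    D2 i (fun y => f y + g y) x = D2 i f x + D2 i g x := by
  unfold D2
  rw [fderiv_fun_add hf hg]
  simp

lemma coord_hasFDerivAt (j : Fin 2) (x : EuclideanSpace ℝ (Fin 2)) :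
    HasFDerivAt (fun y : EuclideanSpace ℝ (Fin 2) => ((y j : ℝ) : ℂ))
      (Complex.ofRealCLM.comp (EuclideanSpace.proj j : EuclideanSpace ℝ (Fin 2) →L[ℝ] ℝ)) x :=
  (Complex.ofRealCLM.comp
    (EuclideanSpace.proj j : EuclideanSpace ℝ (Fin 2) →L[ℝ] ℝ)).hasFDerivAt

lemma D2_coord (i j : Fin 2) :
    D2 i (fun y : EuclideanSpace ℝ (Fin 2) => ((y j : ℝ) : ℂ)) =
      fun _ => if j = i then 1 else 0 := by
  ext x
  unfold D2
  rw [(coord_hasFDerivAt j x).fderiv]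
  by_cases h : j = i <;> simp [h]

lemma D2_const (i : Fin 2) (c : ℂ) (x : EuclideanSpace ℝ (Fin 2)) :
    D2 i (fun _ => c) x = 0 := by
  simp [D2]

/-- derivative of a dyadic sum -/
lemma D2_dsum (i : Fin 2) (h : SchwartzMap (EuclideanSpace ℝ (Fin 2)) ℂ) (c : ℂ) (a : ℕ → ℂ)
    (n : ℕ) :
    D2 i (fun x => c * ∑ k ∈ Finset.Icc 1 n, a k * h ((2 : ℝ) ^ k • x)) =
      fun x => c * ∑ k ∈ Finset.Icc 1 n, (a k * 2 ^ k) * D2 i h ((2 : ℝ) ^ k • x) := by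
  ext x
  have h1 : ∀ k : ℕ, HasFDerivAt (fun x => a k * h ((2 : ℝ) ^ k • x))
      (a k • ((fderiv ℝ h ((2 : ℝ) ^ k • x)).comp
        ((2 : ℝ) ^ k • ContinuousLinearMap.id ℝ (EuclideanSpace ℝ (Fin 2))))) x := by
    intro k
    refine HasFDerivAt.const_mul ?_ (a k)
    refine HasFDerivAt.comp x (h.differentiableAt.hasFDerivAt) ?_
    exact ((2 : ℝ) ^ k • ContinuousLinearMap.id ℝ (EuclideanSpace ℝ (Fin 2))).hasFDerivAt
  have h2 := (HasFDerivAt.fun_sum (u := Finset.Icc 1 n) (fun k _ => h1 k)).const_mul c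
  unfold D2
  rw [h2.fderiv]
  simp [mul_assoc]

lemma D2_comm (f : EuclideanSpace ℝ (Fin 2) → ℂ) (hf : ContDiff ℝ 2 f)
    (i j : Fin 2) (x : EuclideanSpace ℝ (Fin 2)) : D2 i (D2 j f) x = D2 j (D2 i f) x := by
  have hd : Differentiable ℝ (fderiv ℝ f) :=
    (hf.fderiv_right (m := 1) (by norm_num)).differentiable (by norm_num)
  have key : ∀ i j, D2 i (D2 j f) x =
      fderiv ℝ (fderiv ℝ f) x (EuclideanSpace.single i 1) (EuclideanSpace.single j 1) := by
    intro i j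
    unfold D2
    rw [fderiv_clm_apply (hd x) (by fun_prop)]
    simp
  rw [key, key]
  have := (hf.contDiffAt (x := x)).isSymmSndFDerivAt (by simp)
  exact this _ _

lemma tele (n : ℕ) (r : ℝ) (hr : 0 ≤ r) :
    ∑ k ∈ Finset.Icc 1 n, (2 ^ k * r) / ((1 + 2 ^ k * r) * (1 + 2 * (2 ^ k * r))) ≤ 1 := by
  have : ∑ k ∈ Finset.Icc 1 n, (2 ^ k * r) / ((1 + 2 ^ k * r) * (1 + 2 * (2 ^ k * r)))
      = (2 ^ (n+1) * r) / (1 + 2 ^ (n+1) * r) - (2 * r) / (1 + 2 * r) := by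
    induction n with
    | zero => simp
    | succ n ih =>
      rw [Finset.sum_Icc_succ_top (by omega), ih]
      have h1 : 0 < 1 + 2 ^ (n+1) * r := by positivity
      have h2 : 0 < 1 + 2 * (2 ^ (n+1) * r) := by positivity
      have h3 : 0 < 1 + 2 * r := by positivity
      rw [show (2:ℝ) ^ (n+1+1) * r = 2 * (2 ^ (n+1) * r) by ring]
      generalize (2:ℝ) ^ (n+1) * r = t at *
      have e : t / ((1 + t) * (1 + 2 * t)) = 2 * t / (1 + 2 * t) - t / (1 + t) := by
        rw [div_sub_div _ _ h2.ne' h1.ne', div_eq_div_iff (by positivity) (by positivity)]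
        ring
      rw [e]
      ring
  rw [this]
  have h1 : (2 ^ (n+1) * r) / (1 + 2 ^ (n+1) * r) ≤ 1 := by
    rw [div_le_one (by positivity)]; linarith
  have h2 : 0 ≤ (2 * r) / (1 + 2 * r) := by positivity
  linarith

lemma dyadic_bound (h : SchwartzMap (EuclideanSpace ℝ (Fin 2)) ℂ) (h0 : h 0 = 0) :
    ∃ C : ℝ, 0 ≤ C ∧ ∀ (n : ℕ) (a : ℕ → ℂ), (∀ k ∈ Finset.Icc 1 n, ‖a k‖ ≤ 1) →
      ∀ x, ‖∑ k ∈ Finset.Icc 1 n, a k * h ((2 : ℝ) ^ k • x)‖ ≤ C := by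
  obtain ⟨A, hA⟩ := h.decay 0 1
  obtain ⟨B, hB⟩ := h.decay 2 0
  simp only [pow_zero, one_mul, norm_iteratedFDeriv_one, norm_iteratedFDeriv_zero] at hA hB
  have hApos : 0 ≤ A := (norm_nonneg _).trans (hA.2 0)
  have hBpos : 0 ≤ B := hB.1.le
  have hlip : ∀ y, ‖h y‖ ≤ A * ‖y‖ := by
    intro y
    have := Convex.norm_image_sub_le_of_norm_fderiv_le (𝕜 := ℝ) (f := h) (C := A)
      (s := Set.univ) (fun x _ => h.differentiableAt) (fun x _ => hA.2 x) convex_univ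
      (Set.mem_univ 0) (Set.mem_univ y)
    simpa [h0] using this
  have hkey : ∀ y, ‖h y‖ ≤ 6 * (A + B) * (‖y‖ / ((1 + ‖y‖) * (1 + 2 * ‖y‖))) := by
    intro y
    have hy := norm_nonneg y
    have hh := norm_nonneg (h y)
    have e1 := hlip y
    have e2 := hB.2 y
    rw [← mul_div_assoc, le_div_iff₀ (by positivity)]
    generalize ‖y‖ = t at *
    generalize ‖h y‖ = s at *
    rcases le_total t 1 with ht | ht
    · calc s * ((1 + t) * (1 + 2 * t)) ≤ s * 6 := by gcongr; nlinarith
        _ ≤ 6 * (A + B) * t := by nlinarith [mul_nonneg hBpos hy]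
    · calc s * ((1 + t) * (1 + 2 * t)) ≤ s * (6 * t ^ 2) :=
          mul_le_mul_of_nonneg_left (by nlinarith) hh
        _ ≤ 6 * B := by linarith
        _ ≤ 6 * (A + B) * t := by nlinarith [mul_nonneg hApos hy]
  refine ⟨6 * (A + B), by positivity, fun n a ha x => ?_⟩
  calc ‖∑ k ∈ Finset.Icc 1 n, a k * h ((2 : ℝ) ^ k • x)‖
      ≤ ∑ k ∈ Finset.Icc 1 n, 6 * (A + B) *
        ((2 ^ k * ‖x‖) / ((1 + 2 ^ k * ‖x‖) * (1 + 2 * (2 ^ k * ‖x‖)))) := by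
        refine norm_sum_le_of_le _ fun k hk => ?_
        have e := hkey ((2 : ℝ) ^ k • x)
        rw [norm_smul, norm_pow, Real.norm_ofNat] at e
        rw [norm_mul]
        calc _ ≤ 1 * ‖h ((2 : ℝ) ^ k • x)‖ := by gcongr; exact ha k hk
          _ ≤ _ := by rw [one_mul]; exact e
    _ ≤ 6 * (A + B) * 1 := by
        rw [← Finset.mul_sum]
        gcongr
        exact tele n _ (norm_nonneg _)
    _ = _ := mul_one _

lemma geom_bound (h : SchwartzMap (EuclideanSpace ℝ (Fin 2)) ℂ) :
    ∃ C : ℝ, 0 ≤ C ∧ ∀ (n : ℕ) (a : ℕ → ℂ), (∀ k ∈ Finset.Icc 1 n, ‖a k‖ ≤ (1 / 2) ^ k) →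
      ∀ x, ‖∑ k ∈ Finset.Icc 1 n, a k * h ((2 : ℝ) ^ k • x)‖ ≤ C := by
  obtain ⟨B, hB⟩ := h.decay 0 0
  simp only [pow_zero, one_mul, norm_iteratedFDeriv_zero] at hB
  refine ⟨B * 2, by linarith [hB.1], fun n a ha x => ?_⟩
  calc ‖∑ k ∈ Finset.Icc 1 n, a k * h ((2 : ℝ) ^ k • x)‖
      ≤ ∑ k ∈ Finset.Icc 1 n, B * (1 / 2 : ℝ) ^ k := by
        refine norm_sum_le_of_le _ fun k hk => ?_
        rw [norm_mul, mul_comm]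
        gcongr
        · exact hB.1.le
        · exact hB.2 _
        · exact ha k hk
    _ ≤ B * 2 := by
        rw [← Finset.mul_sum]
        have := hB.1
        gcongr
        calc _ ≤ ∑' k : ℕ, (1 / 2 : ℝ) ^ k :=
              summable_geometric_two.sum_le_tsum _ (fun _ _ => by positivity)
          _ = 2 := tsum_geometric_two

/-- vanishing of `∂₁∂₂φ̌` at the origin, by reflection symmetry -/
lemma mixed_zero (P : SchwartzMap (EuclideanSpace ℝ (Fin 2)) ℂ)
    (R : EuclideanSpace ℝ (Fin 2) ≃ₗᵢ[ℝ] EuclideanSpace ℝ (Fin 2))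
    (hR0 : R (EuclideanSpace.single 0 1) = -EuclideanSpace.single 0 1)
    (hR1 : R (EuclideanSpace.single 1 1) = EuclideanSpace.single 1 1)
    (hP : ∀ x, P (R x) = P x) : D2 0 (D2 1 P) 0 = 0 := by
  have comp : ∀ (Q : SchwartzMap (EuclideanSpace ℝ (Fin 2)) ℂ), (∀ x, Q (R x) = Q x) →
      ∀ x v, fderiv ℝ Q (R x) (R v) = fderiv ℝ Q x v := by
    intro Q hQ x v
    have h1 : HasFDerivAt (fun x => Q (R x))
        ((fderiv ℝ Q (R x)).comp (R.toContinuousLinearEquiv : _ →L[ℝ] _)) x :=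
      HasFDerivAt.comp x (f := fun x => R x) (Q.differentiableAt.hasFDerivAt)
        R.toContinuousLinearEquiv.hasFDerivAt
    have h2 : (fun x => Q (R x)) = Q := funext hQ
    rw [h2] at h1
    rw [h1.fderiv]
    rfl
  obtain ⟨Q, hQ⟩ := D2_schwartz 1 P
  have hQR : ∀ x, Q (R x) = Q x := by
    intro x
    rw [← hQ]
    have := comp P hP x (EuclideanSpace.single 1 1)
    rw [hR1] at this
    exact this
  rw [hQ]
  have := comp Q hQR 0 (EuclideanSpace.single 0 1)
  rw [hR0, map_zero, map_neg] at this
  exact self_eq_neg.mp this.symm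

lemma exists_refl : ∃ R : EuclideanSpace ℝ (Fin 2) ≃ₗᵢ[ℝ] EuclideanSpace ℝ (Fin 2),
    R (EuclideanSpace.single 0 1) = -EuclideanSpace.single 0 1 ∧
    R (EuclideanSpace.single 1 1) = EuclideanSpace.single 1 1 := by
  refine ⟨(ℝ ∙ (EuclideanSpace.single 0 1 : EuclideanSpace ℝ (Fin 2)))ᗮ.reflection,
    Submodule.reflection_orthogonalComplement_singleton_eq_neg _,
    Submodule.reflection_mem_subspace_eq_self ?_⟩
  rw [Submodule.mem_orthogonal_singleton_iff_inner_right]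
  simp [EuclideanSpace.inner_single_left]

/-- second derivatives of `y₁y₂ψ` vanish at the origin -/
lemma second_zero (ψ : SchwartzMap (EuclideanSpace ℝ (Fin 2)) ℂ) (h0 : ψ 0 = 0) (i j : Fin 2) :
    D2 j (D2 i (fun y => (((y 0 : ℝ) : ℂ) * ((y 1 : ℝ) : ℂ)) * ψ y)) 0 = 0 := by
  have c : ∀ j x, DifferentiableAt ℝ
      (fun y : EuclideanSpace ℝ (Fin 2) => ((y j : ℝ) : ℂ)) x :=
    fun j x => (coord_hasFDerivAt j x).differentiableAt
  have hψ : ∀ x, DifferentiableAt ℝ ψ x := fun x => ψ.differentiableAt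
  obtain ⟨ψ', hψ'⟩ := D2_schwartz i ψ
  have hψ'' : ∀ x, DifferentiableAt ℝ ψ' x := fun x => ψ'.differentiableAt
  have e : D2 i (fun y => (((y 0 : ℝ) : ℂ) * ((y 1 : ℝ) : ℂ)) * ψ y) =
      fun y => ((if (0 : Fin 2) = i then 1 else 0) * ((y 1 : ℝ) : ℂ) +
        ((y 0 : ℝ) : ℂ) * (if (1 : Fin 2) = i then 1 else 0)) * ψ y +
        (((y 0 : ℝ) : ℂ) * ((y 1 : ℝ) : ℂ)) * ψ' y := by
    ext x
    rw [D2_mul i ((c 0 x).fun_mul (c 1 x)) (hψ x), D2_mul i (c 0 x) (c 1 x), D2_coord, D2_coord, hψ']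
  rw [e, D2_add, D2_mul, D2_mul, D2_mul]
  · simp [h0]
  all_goals first
    | exact c _ _
    | exact hψ _
    | exact hψ'' _
    | exact (c 0 _).mul (c 1 _)
    | exact ((c 1 _).const_mul _).add ((c 0 _).mul_const _)
    | exact (((c 1 _).const_mul _).add ((c 0 _).mul_const _)).mul (hψ _)
    | exact ((c 0 _).mul (c 1 _)).mul (hψ'' _)

lemma main_struct (φ : EuclideanSpace ℝ (Fin 2) → ℝ)
    (hsm : ContDiff ℝ (⊤ : ℕ∞) φ)
    (hradial : ∀ ξ η : EuclideanSpace ℝ (Fin 2), ‖ξ‖ = ‖η‖ → φ ξ = φ η)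
    (hsupp : ∀ ξ, φ ξ ≠ 0 → 4 / 3 ≤ ‖ξ‖ ∧ ‖ξ‖ ≤ 3 / 2) :
    ∃ g : SchwartzMap (EuclideanSpace ℝ (Fin 2)) ℂ,
      (∀ i j, D2 j (D2 i g) 0 = 0) ∧
      ∀ n, fDamp φ n = fun x => (Gam n : ℂ) * ∑ k ∈ Finset.Icc 1 n,
        (((1 / (k : ℝ)) * (2 : ℝ) ^ (-(2 * (k : ℤ))) : ℝ) : ℂ) * g ((2 : ℝ) ^ k • x) := by
  have hcs : HasCompactSupport (fun ξ => (φ ξ : ℂ)) := by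
    refine HasCompactSupport.of_support_subset_isCompact
      (isCompact_closedBall (0 : EuclideanSpace ℝ (Fin 2)) (3 / 2)) ?_
    intro ξ hξ
    have : φ ξ ≠ 0 := by simpa using hξ
    simpa using (hsupp ξ this).2
  have hcd : ContDiff ℝ (⊤ : ℕ∞) (fun ξ => (φ ξ : ℂ)) := Complex.ofRealCLM.contDiff.comp hsm
  let Φ := hcs.toSchwartzMap hcd
  let P : SchwartzMap (EuclideanSpace ℝ (Fin 2)) ℂ := 𝓕⁻ Φ
  have hP : phinv2 φ = P := by
    rw [SchwartzMap.fourierInv_coe]; rfl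
  obtain ⟨P1, hP1⟩ := D2_schwartz 1 P
  obtain ⟨ψ, hψ⟩ := D2_schwartz 0 P1
  obtain ⟨R, hR0, hR1⟩ := exists_refl
  have hPR : ∀ x, P (R x) = P x := by
    intro x
    rw [← hP]
    unfold phinv2
    rw [← Real.fourierInv_comp_linearIsometry]
    have e : (fun ξ => (φ ξ : ℂ)) ∘ R = fun ξ => (φ ξ : ℂ) := by
      ext ξ
      simp only [Function.comp]
      rw [hradial (R ξ) ξ (R.norm_map ξ)]
    rw [e]
  have hψ0 : ψ 0 = 0 := by
    rw [← hψ, ← hP1]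
    exact mixed_zero P R hR0 hR1 hPR
  have htg : Function.HasTemperateGrowth
      (fun y : EuclideanSpace ℝ (Fin 2) => ((y 0 : ℝ) : ℂ) * ((y 1 : ℝ) : ℂ)) := by
    have c : ∀ j, Function.HasTemperateGrowth
        (fun y : EuclideanSpace ℝ (Fin 2) => ((y j : ℝ) : ℂ)) := fun j =>
      (Complex.ofRealCLM.comp
        (EuclideanSpace.proj j : EuclideanSpace ℝ (Fin 2) →L[ℝ] ℝ)).hasTemperateGrowth
    exact (c 0).mul (c 1)
  let g := SchwartzMap.smulLeftCLM ℂ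
    (fun y : EuclideanSpace ℝ (Fin 2) => ((y 0 : ℝ) : ℂ) * ((y 1 : ℝ) : ℂ)) ψ
  have hg : (g : EuclideanSpace ℝ (Fin 2) → ℂ) =
      fun y => (((y 0 : ℝ) : ℂ) * ((y 1 : ℝ) : ℂ)) * ψ y := by
    ext y
    exact SchwartzMap.smulLeftCLM_apply_apply htg ψ y
  refine ⟨g, fun i j => ?_, fun n => ?_⟩
  · rw [hg]; exact second_zero ψ hψ0 i j
  · ext x
    unfold fDamp
    rw [hP, hP1, hψ, hg]
    congr 1
    refine Finset.sum_congr rfl fun k _ => ?_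
    push_cast
    ring

lemma Gam_tendsto : Tendsto (fun n : ℕ => Gam n) atTop (nhds 0) := by
  unfold Gam
  simp only [one_div]
  exact ((Real.tendsto_log_atTop.comp Real.tendsto_log_atTop).comp
    tendsto_natCast_atTop_atTop).inv_tendsto_atTop

lemma Gam_nonneg (n : ℕ) (hn : 3 ≤ n) : 0 ≤ Gam n := by
  unfold Gam
  have h3 : (3 : ℝ) ≤ n := by exact_mod_cast hn
  have : 1 ≤ Real.log n := by
    rw [Real.le_log_iff_exp_le (by linarith)]
    linarith [Real.exp_one_lt_d9]
  have := Real.log_nonneg this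
  positivity

/-- the initial data `u₀ⁿ = (∂₂f_n, −∂₁f_n)` is divergence-free and
satisfies `‖u₀ⁿ‖_{W^{1,∞}} ≤ C Γ_n`, hence `‖u₀ⁿ‖_{W^{1,∞}} → 0` as `n → ∞`. -/
theorem stmt18 (φ : EuclideanSpace ℝ (Fin 2) → ℝ)
    (hsm : ContDiff ℝ (⊤ : ℕ∞) φ)
    (hrange : ∀ ξ, φ ξ ∈ Set.Icc (0 : ℝ) 1)
    (hradial : ∀ ξ η : EuclideanSpace ℝ (Fin 2), ‖ξ‖ = ‖η‖ → φ ξ = φ η)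
    (hsupp : ∀ ξ, φ ξ ≠ 0 → 4 / 3 ≤ ‖ξ‖ ∧ ‖ξ‖ ≤ 3 / 2)
    (hne : φ ≠ 0) :
    (∀ n : ℕ, ∀ x : EuclideanSpace ℝ (Fin 2),
      D2 0 (D2 1 (fDamp φ n)) x + D2 1 (fun y => -(D2 0 (fDamp φ n) y)) x = 0) ∧
    ∃ C : ℝ, 0 < C ∧
      (∀ n : ℕ, 3 ≤ n → ∀ x : EuclideanSpace ℝ (Fin 2),
        ‖D2 1 (fDamp φ n) x‖ + ‖D2 0 (fDamp φ n) x‖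
          + ‖D2 0 (D2 1 (fDamp φ n)) x‖ + ‖D2 1 (D2 1 (fDamp φ n)) x‖
          + ‖D2 0 (D2 0 (fDamp φ n)) x‖ + ‖D2 1 (D2 0 (fDamp φ n)) x‖
            ≤ C * Gam n) ∧
      Tendsto (fun n : ℕ => C * Gam n) atTop (nhds 0) := by
  obtain ⟨g, hg0, hf⟩ := main_struct φ hsm hradial hsupp
  have hd1 : ∀ n i, D2 i (fDamp φ n) = fun x => (Gam n : ℂ) * ∑ k ∈ Finset.Icc 1 n,
      ((((1 / (k : ℝ)) * (2 : ℝ) ^ (-(2 * (k : ℤ))) : ℝ) : ℂ) * 2 ^ k) *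
        D2 i g ((2 : ℝ) ^ k • x) := by
    intro n i
    rw [hf, D2_dsum]
  have hd2 : ∀ n i j, D2 j (D2 i (fDamp φ n)) = fun x => (Gam n : ℂ) * ∑ k ∈ Finset.Icc 1 n,
      ((((1 / (k : ℝ)) * (2 : ℝ) ^ (-(2 * (k : ℤ))) : ℝ) : ℂ) * 2 ^ k * 2 ^ k) *
        D2 j (D2 i g) ((2 : ℝ) ^ k • x) := by
    intro n i j
    obtain ⟨g', hg'⟩ := D2_schwartz i g
    rw [hd1, hg', D2_dsum]
  have hz : ∀ k : ℕ, (2 : ℝ) ^ (-(2 * (k : ℤ))) = (1 / 2) ^ k * (1 / 2) ^ k := by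
    intro k
    rw [zpow_neg, two_mul, zpow_add₀ (by norm_num), zpow_natCast, one_div, inv_pow, mul_inv]
  have hk1 : ∀ k : ℕ, k ≥ 1 → 1 / (k : ℝ) ≤ 1 := by
    intro k hk
    have : (1 : ℝ) ≤ k := by exact_mod_cast hk
    rw [div_le_one (by linarith)]
    exact this
  have hp : ∀ k : ℕ, (1 / 2 : ℝ) ^ k * 2 ^ k = 1 := by
    intro k
    rw [← mul_pow]; norm_num
  have b1 : ∀ i, ∃ C : ℝ, 0 ≤ C ∧ ∀ n, 3 ≤ n → ∀ x, ‖D2 i (fDamp φ n) x‖ ≤ C * Gam n := by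
    intro i
    obtain ⟨g', hg'⟩ := D2_schwartz i g
    obtain ⟨C, hC, hb⟩ := geom_bound g'
    refine ⟨C, hC, fun n hn x => ?_⟩
    rw [hd1, hg', norm_mul, Complex.norm_real, Real.norm_of_nonneg (Gam_nonneg n hn), mul_comm]
    refine mul_le_mul_of_nonneg_right (hb n _ (fun k hk => ?_) x) (Gam_nonneg n hn)
    rw [norm_mul, Complex.norm_real, norm_pow, Complex.norm_ofNat,
      Real.norm_of_nonneg (by positivity), hz]
    calc _ = 1 / (k : ℝ) * (1 / 2) ^ k * ((1 / 2 : ℝ) ^ k * 2 ^ k) := by ring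
      _ = 1 / (k : ℝ) * (1 / 2) ^ k := by rw [hp, mul_one]
      _ ≤ 1 * (1 / 2) ^ k := by
        gcongr; exact hk1 k (Finset.mem_Icc.mp hk).1
      _ = _ := one_mul _
  have b2 : ∀ i j, ∃ C : ℝ, 0 ≤ C ∧ ∀ n, 3 ≤ n → ∀ x,
      ‖D2 j (D2 i (fDamp φ n)) x‖ ≤ C * Gam n := by
    intro i j
    obtain ⟨g', hg'⟩ := D2_schwartz i g
    obtain ⟨g'', hg''⟩ := D2_schwartz j g'
    have h0 : g'' 0 = 0 := by rw [← hg'', ← hg']; exact hg0 i j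
    obtain ⟨C, hC, hb⟩ := dyadic_bound g'' h0
    refine ⟨C, hC, fun n hn x => ?_⟩
    rw [hd2, hg', hg'', norm_mul, Complex.norm_real, Real.norm_of_nonneg (Gam_nonneg n hn),
      mul_comm]
    refine mul_le_mul_of_nonneg_right (hb n _ (fun k hk => ?_) x) (Gam_nonneg n hn)
    rw [norm_mul, norm_mul, Complex.norm_real, norm_pow, Complex.norm_ofNat,
      Real.norm_of_nonneg (by positivity), hz]
    calc _ = 1 / (k : ℝ) * ((1 / 2 : ℝ) ^ k * 2 ^ k) * ((1 / 2 : ℝ) ^ k * 2 ^ k) := by ring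
      _ = 1 / (k : ℝ) := by rw [hp, mul_one, mul_one]
      _ ≤ 1 := hk1 k (Finset.mem_Icc.mp hk).1
  refine ⟨fun n x => ?_, ?_⟩
  · have hneg : D2 1 (fun y => -(D2 0 (fDamp φ n) y)) x = -D2 1 (D2 0 (fDamp φ n)) x := by
      change fderiv ℝ (fun y => -(D2 0 (fDamp φ n) y)) x _ = _
      rw [fderiv_fun_neg]
      rfl
    have e : ∀ y, D2 0 (D2 1 g) y = D2 1 (D2 0 g) y := D2_comm g (g.smooth 2) 0 1
    rw [hneg, hd2, hd2]
    simp only [e]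
    ring
  · obtain ⟨C1, p1, h1⟩ := b1 1
    obtain ⟨C2, p2, h2⟩ := b1 0
    obtain ⟨C3, p3, h3⟩ := b2 1 0
    obtain ⟨C4, p4, h4⟩ := b2 1 1
    obtain ⟨C5, p5, h5⟩ := b2 0 0
    obtain ⟨C6, p6, h6⟩ := b2 0 1
    refine ⟨C1 + C2 + C3 + C4 + C5 + C6 + 1, by positivity, fun n hn x => ?_, ?_⟩
    · have := Gam_nonneg n hn
      linarith [h1 n hn x, h2 n hn x, h3 n hn x, h4 n hn x, h5 n hn x, h6 n hn x]
    · simpa using Gam_tendsto.const_mul (C1 + C2 + C3 + C4 + C5 + C6 + 1)
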